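/- The two edge invariant measures give the same value to the Lyapunov functional: ∫_ℝ log(1 + e^{−y}) ν_▷(dy) = ∫_ℝ log(1 + e^{−y}) ν_◁(dy); equivalently, ∫_ℝ F_▷(y)/(1 + e^y) dy = ∫_ℝ F_◁(y)/(1 + e^y) dy. -/

import Mathlib

open MeasureTheory ProbabilityTheory Real Filter Set
open scoped ENNReal

noncomputable def hkfun (k x : ℝ) : ℝ :=
  Real.log ((Real.exp (-k) + Real.exp x) / (1 + Real.exp (x - k)))

noncomputable def hY (y : ℝ) : ℝ := y + Real.log (1 + Real.exp (-y))

/-- A σ-finite measure ν is invariant for the chain Y_{n+1} = z_{n+1} + hY (Y_n),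
where the increments have density ζ. -/
def IsInvariantY (ζ : ℝ → ℝ) (ν : Measure ℝ) : Prop :=
  ∀ g : ℝ → ℝ≥0∞, Measurable g →
    ∫⁻ z, g z ∂ν = ∫⁻ y, ∫⁻ z, g (z + hY y) * ENNReal.ofReal (ζ z) ∂volume ∂ν

noncomputable def Fs (ν : Measure ℝ) (x : ℝ) : ℝ := (ν (Set.Iic x)).toReal

/-!
Both chains are centred random walks `Y' = z + h Y` whose drift `h y - y = log (1 + e^{-y})` pushes
them up. Test the invariance of `ν` against the truncated square `y ↦ ((T - y)⁺)²`. Because the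
steps are centred, the first-order Taylor term in `z` integrates to zero and what remains is
`∫ (((T - y)⁺)² - ((T - h y)⁺)²) ν(dy) = ∫∫ R(T - h y, z) ν(dy) P(dz)`,
where `R` is the second-order remainder. Divide by `T` and let `T → ∞`. On the left the integrand
tends to `2 (h y - y)`. On the right `R(T - h y, z)` equals `z²` for `y ≤ T - O(1 + |z|)` and
vanishes for `y > T + |z|`, so `ν((-∞, T]) ∼ T` makes it tend to `E[z²]`. Hence the Lyapunov
functional is `E[z²] / 2`, which does not change when the law of the steps is reflected.
-/

section TruncatedSquare

variable {a b t z S T : ℝ}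

/-- The truncated square `(a⁺)²`; the test functions for invariance are `y ↦ truncSq (T - y)`. -/
noncomputable def truncSq (a : ℝ) : ℝ := max a 0 ^ 2

lemma truncSq_nonneg (a : ℝ) : 0 ≤ truncSq a := sq_nonneg _

lemma truncSq_of_nonneg (ha : 0 ≤ a) : truncSq a = a ^ 2 := by
  rw [truncSq, max_eq_left ha]

lemma truncSq_of_nonpos (ha : a ≤ 0) : truncSq a = 0 := by
  rw [truncSq, max_eq_right ha, zero_pow two_ne_zero]

lemma truncSq_mono : Monotone truncSq := fun _ _ hab ↦
  pow_le_pow_left₀ (le_max_right _ _) (max_le_max_right 0 hab) 2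

lemma measurable_truncSq : Measurable truncSq := truncSq_mono.measurable

-- The derivative of `truncSq` is 2-Lipschitz.
lemma truncSq_add_sub_truncSq_add_le (hba : b ≤ a) (ht : 0 ≤ t) :
    truncSq (a + t) - truncSq (b + t) ≤ truncSq a - truncSq b + 2 * (a - b) * t := by
  unfold truncSq
  rcases max_cases a 0 with ⟨h₁, _⟩ | ⟨h₁, _⟩ <;> rcases max_cases b 0 with ⟨h₂, _⟩ | ⟨h₂, _⟩ <;>
  rcases max_cases (a + t) 0 with ⟨h₃, _⟩ | ⟨h₃, _⟩ <;>
  rcases max_cases (b + t) 0 with ⟨h₄, _⟩ | ⟨h₄, _⟩ <;> rw [h₁, h₂, h₃, h₄] <;> nlinarith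

lemma truncSq_sub_sub_truncSq_sub_div_le (hab : a ≤ b) (hS : 0 ≤ S) (hST : S ≤ T) (hT : 0 < T) :
    (truncSq (T - a) - truncSq (T - b)) / T
      ≤ (truncSq (S - a) - truncSq (S - b)) / T + 2 * (b - a) := by
  have hshift := truncSq_add_sub_truncSq_add_le (sub_le_sub_left hab S) (sub_nonneg.2 hST)
  rw [show S - a + (T - S) = T - a by ring, show S - b + (T - S) = T - b by ring] at hshift
  rw [div_add' _ _ _ hT.ne', div_le_div_iff_of_pos_right hT]
  linarith [mul_nonneg (sub_nonneg.2 hab) hS]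

lemma tendsto_truncSq_sub_sub_truncSq_sub_div (a b : ℝ) :
    Tendsto (fun T ↦ (truncSq (T - a) - truncSq (T - b)) / T) atTop (nhds (2 * (b - a))) := by
  have hlim : Tendsto (fun T : ℝ ↦ 2 * (b - a) - (b - a) * (a + b) * T⁻¹) atTop
      (nhds (2 * (b - a) - (b - a) * (a + b) * 0)) :=
    tendsto_const_nhds.sub (tendsto_const_nhds.mul tendsto_inv_atTop_zero)
  rw [mul_zero, sub_zero] at hlim
  refine hlim.congr' ?_
  filter_upwards [eventually_gt_atTop 0, eventually_ge_atTop a, eventually_ge_atTop b]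
    with T hT ha hb
  rw [truncSq_of_nonneg (sub_nonneg.2 ha), truncSq_of_nonneg (sub_nonneg.2 hb)]
  field_simp
  ring

/-- The second-order Taylor remainder of `truncSq` at `a` for the displacement `-z`. -/
noncomputable def truncSqRem (a z : ℝ) : ℝ := truncSq (a - z) - truncSq a + 2 * z * max a 0

lemma truncSqRem_nonneg (a z : ℝ) : 0 ≤ truncSqRem a z := by
  unfold truncSqRem truncSq
  rcases max_cases (a - z) 0 with ⟨h₁, _⟩ | ⟨h₁, _⟩ <;>
  rcases max_cases a 0 with ⟨h₂, _⟩ | ⟨h₂, _⟩ <;> rw [h₁, h₂] <;> nlinarith [sq_nonneg z]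

lemma truncSqRem_le_sq (a z : ℝ) : truncSqRem a z ≤ z ^ 2 := by
  unfold truncSqRem truncSq
  rcases max_cases (a - z) 0 with ⟨h₁, _⟩ | ⟨h₁, _⟩ <;>
  rcases max_cases a 0 with ⟨h₂, _⟩ | ⟨h₂, _⟩ <;> rw [h₁, h₂] <;>
  nlinarith [sq_nonneg z, sq_nonneg (a - z)]

lemma truncSqRem_of_abs_le (h : |z| ≤ a) : truncSqRem a z = z ^ 2 := by
  have ha : 0 ≤ a := (abs_nonneg z).trans h
  rw [truncSqRem, truncSq_of_nonneg (by linarith [le_abs_self z]), truncSq_of_nonneg ha,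
    max_eq_left ha]
  ring

lemma truncSqRem_of_le_neg_abs (h : a ≤ -|z|) : truncSqRem a z = 0 := by
  have ha : a ≤ 0 := by linarith [abs_nonneg z]
  rw [truncSqRem, truncSq_of_nonpos (by linarith [neg_abs_le z]), truncSq_of_nonpos ha,
    max_eq_right ha]
  ring

lemma measurable_truncSqRem : Measurable fun p : ℝ × ℝ ↦ truncSqRem p.1 p.2 := by
  have := measurable_truncSq
  unfold truncSqRem
  fun_prop

lemma lintegral_truncSq_sub {μ : Measure ℝ} [IsProbabilityMeasure μ] (hμ : MemLp id 2 μ)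
    (hmean : ∫ z, z ∂μ = 0) (a : ℝ) :
    ∫⁻ z, ENNReal.ofReal (truncSq (a - z)) ∂μ
      = ENNReal.ofReal (truncSq a) + ∫⁻ z, ENNReal.ofReal (truncSqRem a z) ∂μ := by
  have hlin : Integrable (fun z ↦ 2 * max a 0 * z) μ :=
    (hμ.integrable one_le_two).const_mul _
  have hrem : Integrable (truncSqRem a) μ :=
    hμ.integrable_sq.mono' (by have := measurable_truncSqRem; fun_prop) <| .of_forall fun z ↦ by
      rw [Real.norm_of_nonneg (truncSqRem_nonneg a z)]
      exact truncSqRem_le_sq a z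
  have hquad : Integrable (fun z ↦ truncSq a + truncSqRem a z) μ := (integrable_const _).add hrem
  have hexpand : (fun z ↦ truncSq (a - z))
      = fun z ↦ truncSq a + truncSqRem a z - 2 * max a 0 * z := by
    funext z
    rw [truncSqRem]
    ring
  have hint : ∫ z, truncSq (a - z) ∂μ = truncSq a + ∫ z, truncSqRem a z ∂μ := by
    rw [hexpand, integral_sub hquad hlin, integral_add (integrable_const _) hrem,
      integral_const_mul, hmean]
    simp
  rw [← ofReal_integral_eq_lintegral_ofReal (hexpand ▸ hquad.sub hlin)
      (.of_forall fun _ ↦ truncSq_nonneg _),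
    ← ofReal_integral_eq_lintegral_ofReal hrem (.of_forall (truncSqRem_nonneg a)), hint,
    ENNReal.ofReal_add (truncSq_nonneg a) (integral_nonneg (truncSqRem_nonneg a))]

end TruncatedSquare

section LinearGrowth

variable {ν : Measure ℝ} {ℓ : ℝ≥0∞}

lemma exists_measure_Iic_le_mul_ofReal (hℓ : ℓ ≠ ⊤)
    (hν : Tendsto (fun x ↦ ν (Iic x) / ENNReal.ofReal x) atTop (nhds ℓ)) :
    ∃ K ≠ ⊤, ∀ x : ℝ, 1 ≤ x → ν (Iic x) ≤ K * ENNReal.ofReal x := by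
  have hlt : ℓ < ℓ + 1 := ENNReal.lt_add_right hℓ one_ne_zero
  obtain ⟨C, hC⟩ := eventually_atTop.1 (hν.eventually_le_const hlt)
  refine ⟨(ℓ + 1) * ENNReal.ofReal (max C 1),
    ENNReal.mul_ne_top (by simpa using hℓ) ENNReal.ofReal_ne_top, fun x hx ↦ ?_⟩
  have hscale : max C 1 ≤ max C 1 * x := le_mul_of_one_le_right (by positivity) hx
  calc ν (Iic x) ≤ ν (Iic (max C 1 * x)) :=
        measure_mono <| Iic_subset_Iic.2 <| le_mul_of_one_le_left (by linarith) (le_max_right C 1)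
    _ ≤ (ℓ + 1) * ENNReal.ofReal (max C 1 * x) :=
        (ENNReal.div_le_iff (by positivity) ENNReal.ofReal_ne_top).1
          (hC _ ((le_max_left C 1).trans hscale))
    _ = (ℓ + 1) * ENNReal.ofReal (max C 1) * ENNReal.ofReal x := by
        rw [ENNReal.ofReal_mul (by positivity), mul_assoc]

lemma measure_Iic_lt_top_of_tendsto (hℓ : ℓ ≠ ⊤)
    (hν : Tendsto (fun x ↦ ν (Iic x) / ENNReal.ofReal x) atTop (nhds ℓ)) (x : ℝ) :
    ν (Iic x) < ⊤ := by
  obtain ⟨K, hK, hbound⟩ := exists_measure_Iic_le_mul_ofReal hℓ hν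
  calc ν (Iic x) ≤ ν (Iic (max x 1)) := measure_mono (Iic_subset_Iic.2 (le_max_left x 1))
    _ ≤ K * ENNReal.ofReal (max x 1) := hbound _ (le_max_right x 1)
    _ < ⊤ := ENNReal.mul_lt_top hK.lt_top ENNReal.ofReal_lt_top

lemma sigmaFinite_of_measure_Iic_lt_top (hν : ∀ x, ν (Iic x) < ⊤) : SigmaFinite ν :=
  ⟨⟨⟨fun n : ℕ ↦ Iic (n : ℝ), fun _ ↦ trivial, fun n ↦ hν n,
    iUnion_eq_univ_iff.2 exists_nat_ge⟩⟩⟩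

lemma tendsto_measure_Iic_add_div
    (hν : Tendsto (fun x ↦ ν (Iic x) / ENNReal.ofReal x) atTop (nhds ℓ)) (b : ℝ) :
    Tendsto (fun x ↦ ν (Iic (x + b)) / ENNReal.ofReal x) atTop (nhds ℓ) := by
  have hshift : Tendsto (fun x : ℝ ↦ x + b) atTop atTop :=
    tendsto_atTop_add_const_right _ _ tendsto_id
  have hratio : Tendsto (fun x : ℝ ↦ ENNReal.ofReal (1 + b * x⁻¹)) atTop (nhds 1) := by
    simpa using ENNReal.tendsto_ofReal
      ((tendsto_const_nhds (x := (1 : ℝ))).add (tendsto_inv_atTop_zero.const_mul b))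
  have hprod := ENNReal.Tendsto.mul (hν.comp hshift) (.inr ENNReal.one_ne_top) hratio
    (.inl one_ne_zero)
  rw [mul_one] at hprod
  refine hprod.congr' ?_
  filter_upwards [eventually_gt_atTop 0, hshift.eventually_gt_atTop 0] with x hx hxb
  rw [show 1 + b * x⁻¹ = (x + b) / x by field_simp, ENNReal.ofReal_div_of_pos hx,
    Function.comp_apply, ← mul_div_assoc,
    ENNReal.div_mul_cancel (by simpa using hxb) ENNReal.ofReal_ne_top]

end LinearGrowth

section ReflectedWalk

variable {h : ℝ → ℝ} {c : ℝ} {μ ν : Measure ℝ} {ℓ : ℝ≥0∞}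

/-- The deterministic loss `((T - y)⁺)² - ((T - h y)⁺)²` of the test function at level `T` under
`y ↦ h y`. -/
noncomputable def truncSqLoss (h : ℝ → ℝ) (T y : ℝ) : ℝ := truncSq (T - y) - truncSq (T - h y)

lemma truncSqLoss_nonneg (hle : ∀ y, y ≤ h y) (T y : ℝ) : 0 ≤ truncSqLoss h T y :=
  sub_nonneg.2 (truncSq_mono (sub_le_sub_left (hle y) T))

lemma measurable_truncSqLoss (hh : Measurable h) (T : ℝ) : Measurable (truncSqLoss h T) := by
  have := measurable_truncSq
  unfold truncSqLoss
  fun_prop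

lemma measurable_truncSqRem_level (hh : Measurable h) (T : ℝ) :
    Measurable fun p : ℝ × ℝ ↦ ENNReal.ofReal (truncSqRem (T - h p.1) p.2) := by
  have hpair : Measurable fun p : ℝ × ℝ ↦ (T - h p.1, p.2) := by fun_prop
  exact (measurable_truncSqRem.comp hpair).ennreal_ofReal

lemma lintegral_truncSq_sub_lt_top (hle : ∀ y, y ≤ h y) (hnonneg : ∀ y, 0 ≤ h y) {T : ℝ}
    (hT : 0 ≤ T) (hν : ν (Iic T) < ⊤) : ∫⁻ y, ENNReal.ofReal (truncSq (T - h y)) ∂ν < ⊤ := by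
  calc ∫⁻ y, ENNReal.ofReal (truncSq (T - h y)) ∂ν
      ≤ ∫⁻ y, (Iic T).indicator (fun _ ↦ ENNReal.ofReal (T ^ 2)) y ∂ν := by
        refine lintegral_mono fun y ↦ ?_
        by_cases hy : y ∈ Iic T
        · rw [indicator_of_mem hy, ← truncSq_of_nonneg hT]
          exact ENNReal.ofReal_le_ofReal (truncSq_mono (sub_le_self T (hnonneg y)))
        · rw [indicator_of_notMem hy, truncSq_of_nonpos (by linarith [hle y, notMem_Iic.1 hy]),
            ENNReal.ofReal_zero]
    _ = ENNReal.ofReal (T ^ 2) * ν (Iic T) := lintegral_indicator_const measurableSet_Iic _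
    _ < ⊤ := ENNReal.mul_lt_top ENNReal.ofReal_lt_top hν

lemma lintegral_truncSqLoss_eq [IsProbabilityMeasure μ] [SFinite ν] (hμ : MemLp id 2 μ)
    (hmean : ∫ z, z ∂μ = 0) (hh : Measurable h) (hle : ∀ y, y ≤ h y) (hnonneg : ∀ y, 0 ≤ h y)
    (hinv : MeasurePreserving (fun p : ℝ × ℝ ↦ p.2 + h p.1) (ν.prod μ) ν) {T : ℝ} (hT : 0 ≤ T)
    (hν : ν (Iic T) < ⊤) :
    ∫⁻ y, ENNReal.ofReal (truncSqLoss h T y) ∂ν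
      = ∫⁻ z, ∫⁻ y, ENNReal.ofReal (truncSqRem (T - h y) z) ∂ν ∂μ := by
  have htest := measurable_truncSq
  have hbase : Measurable fun y ↦ ENNReal.ofReal (truncSq (T - h y)) := by fun_prop
  have hbefore (y) : ENNReal.ofReal (truncSq (T - y))
      = ENNReal.ofReal (truncSq (T - h y)) + ENNReal.ofReal (truncSqLoss h T y) := by
    rw [← ENNReal.ofReal_add (truncSq_nonneg _) (truncSqLoss_nonneg hle T y), truncSqLoss,
      add_sub_cancel]
  have hafter (y) : ∫⁻ z, ENNReal.ofReal (truncSq (T - (z + h y))) ∂μ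
      = ENNReal.ofReal (truncSq (T - h y))
        + ∫⁻ z, ENNReal.ofReal (truncSqRem (T - h y) z) ∂μ := by
    simp only [← lintegral_truncSq_sub hμ hmean, sub_sub, add_comm]
  have hbalance := hinv.lintegral_comp (f := fun y ↦ ENNReal.ofReal (truncSq (T - y)))
    (by fun_prop)
  rw [lintegral_prod _ (by fun_prop), lintegral_congr hafter, lintegral_congr hbefore,
    lintegral_add_left hbase, lintegral_add_left hbase,
    ENNReal.add_right_inj (lintegral_truncSq_sub_lt_top hle hnonneg hT hν).ne] at hbalance
  rw [← hbalance]
  exact lintegral_lintegral_swap (measurable_truncSqRem_level hh T).aemeasurable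

lemma lintegral_truncSqRem_le (hle : ∀ y, y ≤ h y) (T z : ℝ) :
    ∫⁻ y, ENNReal.ofReal (truncSqRem (T - h y) z) ∂ν
      ≤ ENNReal.ofReal (z ^ 2) * ν (Iic (T + |z|)) := by
  rw [← lintegral_indicator_const measurableSet_Iic]
  refine lintegral_mono fun y ↦ ?_
  by_cases hy : y ∈ Iic (T + |z|)
  · rw [indicator_of_mem hy]
    exact ENNReal.ofReal_le_ofReal (truncSqRem_le_sq _ _)
  · rw [truncSqRem_of_le_neg_abs (by linarith [hle y, notMem_Iic.1 hy])]
    simp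

lemma le_lintegral_truncSqRem (hup : ∀ y, h y ≤ max y 0 + c) {T z : ℝ} (hT : c + |z| ≤ T) :
    ENNReal.ofReal (z ^ 2) * ν (Iic (T + -(c + |z|)))
      ≤ ∫⁻ y, ENNReal.ofReal (truncSqRem (T - h y) z) ∂ν := by
  rw [← lintegral_indicator_const measurableSet_Iic]
  refine lintegral_mono (indicator_le fun y hy ↦ ?_)
  have hmax : max y 0 ≤ T - (c + |z|) := max_le (mem_Iic.1 hy) (sub_nonneg.2 hT)
  rw [truncSqRem_of_abs_le (by linarith [hup y])]

lemma tendsto_lintegral_truncSqRem_div (hle : ∀ y, y ≤ h y) (hup : ∀ y, h y ≤ max y 0 + c)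
    (hν : Tendsto (fun x ↦ ν (Iic x) / ENNReal.ofReal x) atTop (nhds ℓ)) (z : ℝ) :
    Tendsto (fun T ↦ (∫⁻ y, ENNReal.ofReal (truncSqRem (T - h y) z) ∂ν) / ENNReal.ofReal T)
      atTop (nhds (ENNReal.ofReal (z ^ 2) * ℓ)) := by
  have hlim (b : ℝ) : Tendsto
      (fun T ↦ ENNReal.ofReal (z ^ 2) * (ν (Iic (T + b)) / ENNReal.ofReal T))
      atTop (nhds (ENNReal.ofReal (z ^ 2) * ℓ)) :=
    ENNReal.Tendsto.const_mul (tendsto_measure_Iic_add_div hν b) (.inr ENNReal.ofReal_ne_top)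
  refine tendsto_of_tendsto_of_tendsto_of_le_of_le' (hlim (-(c + |z|))) (hlim |z|) ?_ ?_
  · filter_upwards [eventually_ge_atTop (c + |z|)] with T hT
    rw [← mul_div_assoc]
    exact ENNReal.div_le_div_right (le_lintegral_truncSqRem hup hT) _
  · refine .of_forall fun T ↦ ?_
    rw [← mul_div_assoc]
    exact ENNReal.div_le_div_right (lintegral_truncSqRem_le hle T z) _

lemma lintegral_truncSqRem_div_le (hle : ∀ y, y ≤ h y) {K : ℝ≥0∞}
    (hK : ∀ x : ℝ, 1 ≤ x → ν (Iic x) ≤ K * ENNReal.ofReal x) {T : ℝ} (hT : 1 ≤ T) (z : ℝ) :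
    (∫⁻ y, ENNReal.ofReal (truncSqRem (T - h y) z) ∂ν) / ENNReal.ofReal T
      ≤ K * ENNReal.ofReal (z ^ 2 + |z| ^ 3) := by
  have hz := abs_nonneg z
  refine ENNReal.div_le_of_le_mul ?_
  calc ∫⁻ y, ENNReal.ofReal (truncSqRem (T - h y) z) ∂ν
      ≤ ENNReal.ofReal (z ^ 2) * ν (Iic (T + |z|)) := lintegral_truncSqRem_le hle T z
    _ ≤ ENNReal.ofReal (z ^ 2) * (K * ENNReal.ofReal ((1 + |z|) * T)) := by
        gcongr
        refine (hK _ (by linarith)).trans ?_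
        gcongr
        nlinarith
    _ = K * ENNReal.ofReal (z ^ 2 + |z| ^ 3) * ENNReal.ofReal T := by
        rw [mul_left_comm, ← ENNReal.ofReal_mul (sq_nonneg z), mul_assoc,
          ← ENNReal.ofReal_mul (by positivity), ← sq_abs z]
        ring_nf

lemma tendsto_lintegral_lintegral_truncSqRem_div [IsProbabilityMeasure μ] [SFinite ν]
    (hμ : MemLp id 3 μ) (hh : Measurable h) (hle : ∀ y, y ≤ h y) (hup : ∀ y, h y ≤ max y 0 + c)
    (hℓ : ℓ ≠ ⊤) (hν : Tendsto (fun x ↦ ν (Iic x) / ENNReal.ofReal x) atTop (nhds ℓ)) :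
    Tendsto (fun T ↦ (∫⁻ z, ∫⁻ y, ENNReal.ofReal (truncSqRem (T - h y) z) ∂ν ∂μ)
      / ENNReal.ofReal T) atTop (nhds ((∫⁻ z, ENNReal.ofReal (z ^ 2) ∂μ) * ℓ)) := by
  obtain ⟨K, hK, hbound⟩ := exists_measure_Iic_le_mul_ofReal hℓ hν
  have hmeas (T : ℝ) : Measurable fun z ↦ ∫⁻ y, ENNReal.ofReal (truncSqRem (T - h y) z) ∂ν :=
    (measurable_truncSqRem_level hh T).lintegral_prod_left'
  have hmoment : Integrable (fun z ↦ z ^ 2 + |z| ^ 3) μ :=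
    (hμ.mono_exponent (by norm_num)).integrable_sq.add
      (hμ.integrable_norm_pow (p := 3) three_ne_zero)
  simp_rw [← lintegral_mul_const ℓ (f := fun z ↦ ENNReal.ofReal (z ^ 2)) (by fun_prop),
    div_eq_mul_inv, ← lintegral_mul_const _ (hmeas _), ← div_eq_mul_inv]
  refine tendsto_lintegral_filter_of_dominated_convergence
    (fun z ↦ K * ENNReal.ofReal (z ^ 2 + |z| ^ 3)) (.of_forall fun T ↦ (hmeas T).div_const _) ?_ ?_
    (.of_forall (tendsto_lintegral_truncSqRem_div hle hup hν))
  · filter_upwards [eventually_ge_atTop 1] with T hT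
    exact .of_forall (lintegral_truncSqRem_div_le hle hbound hT)
  · rw [lintegral_const_mul _ (by fun_prop)]
    exact ENNReal.mul_ne_top hK hmoment.lintegral_lt_top.ne

lemma lintegral_two_mul_sub_le_of_tendsto (hh : Measurable h) {L : ℝ≥0∞}
    (hL : Tendsto (fun T ↦ (∫⁻ y, ENNReal.ofReal (truncSqLoss h T y) ∂ν) / ENNReal.ofReal T)
      atTop (nhds L)) :
    ∫⁻ y, ENNReal.ofReal (2 * (h y - y)) ∂ν ≤ L := by
  have hmeas (T : ℝ) := (measurable_truncSqLoss hh T).ennreal_ofReal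
  have hpoint (y : ℝ) : Tendsto (fun T ↦ ENNReal.ofReal (truncSqLoss h T y) / ENNReal.ofReal T)
      atTop (nhds (ENNReal.ofReal (2 * (h y - y)))) := by
    refine (ENNReal.tendsto_ofReal (tendsto_truncSq_sub_sub_truncSq_sub_div y (h y))).congr' ?_
    filter_upwards [eventually_gt_atTop 0] with T hT
    exact ENNReal.ofReal_div_of_pos hT
  calc ∫⁻ y, ENNReal.ofReal (2 * (h y - y)) ∂ν
      = ∫⁻ y, liminf (fun T ↦ ENNReal.ofReal (truncSqLoss h T y) / ENNReal.ofReal T) atTop ∂ν :=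
        lintegral_congr fun y ↦ (hpoint y).liminf_eq.symm
    _ ≤ liminf (fun T ↦ ∫⁻ y, ENNReal.ofReal (truncSqLoss h T y) / ENNReal.ofReal T ∂ν) atTop :=
        lintegral_liminf_le fun T ↦ (hmeas T).div_const _
    _ = L := by
        simp_rw [div_eq_mul_inv, lintegral_mul_const _ (hmeas _), ← div_eq_mul_inv]
        exact hL.liminf_eq

lemma lintegral_truncSqLoss_div_le (hh : Measurable h) (hle : ∀ y, y ≤ h y) {S T : ℝ}
    (hS : 0 ≤ S) (hST : S ≤ T) (hT : 0 < T) :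
    (∫⁻ y, ENNReal.ofReal (truncSqLoss h T y) ∂ν) / ENNReal.ofReal T
      ≤ (∫⁻ y, ENNReal.ofReal (truncSqLoss h S y) ∂ν) / ENNReal.ofReal T
        + ∫⁻ y, ENNReal.ofReal (2 * (h y - y)) ∂ν := by
  have hmeas (T : ℝ) := (measurable_truncSqLoss hh T).ennreal_ofReal
  simp_rw [div_eq_mul_inv, ← lintegral_mul_const _ (hmeas _), ← div_eq_mul_inv]
  rw [← lintegral_add_left ((hmeas S).div_const _)]
  refine lintegral_mono fun y ↦ ?_
  have hdrift : 0 ≤ 2 * (h y - y) := by linarith [hle y]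
  rw [← ENNReal.ofReal_div_of_pos hT, ← ENNReal.ofReal_div_of_pos hT,
    ← ENNReal.ofReal_add (div_nonneg (truncSqLoss_nonneg hle S y) hT.le) hdrift]
  exact ENNReal.ofReal_le_ofReal (truncSq_sub_sub_truncSq_sub_div_le (hle y) hS hST hT)

lemma le_lintegral_two_mul_sub_of_tendsto (hh : Measurable h) (hle : ∀ y, y ≤ h y) {L : ℝ≥0∞}
    (hL_top : L ≠ ⊤)
    (hL : Tendsto (fun T ↦ (∫⁻ y, ENNReal.ofReal (truncSqLoss h T y) ∂ν) / ENNReal.ofReal T)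
      atTop (nhds L)) :
    L ≤ ∫⁻ y, ENNReal.ofReal (2 * (h y - y)) ∂ν := by
  obtain ⟨S, hS_lt, hS⟩ :=
    ((hL.eventually_lt_const hL_top.lt_top).and (eventually_ge_atTop 0)).exists
  have hS_top : ∫⁻ y, ENNReal.ofReal (truncSqLoss h S y) ∂ν ≠ ⊤ :=
    fun htop ↦ by simp [htop, ENNReal.top_div] at hS_lt
  have hbound : Tendsto (fun T ↦ (∫⁻ y, ENNReal.ofReal (truncSqLoss h S y) ∂ν) / ENNReal.ofReal T
      + ∫⁻ y, ENNReal.ofReal (2 * (h y - y)) ∂ν) atTop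
      (nhds (0 + ∫⁻ y, ENNReal.ofReal (2 * (h y - y)) ∂ν)) := by
    refine Tendsto.add ?_ tendsto_const_nhds
    simpa using ENNReal.Tendsto.const_div ENNReal.tendsto_ofReal_atTop (.inr hS_top)
  rw [← zero_add (∫⁻ y, _ ∂ν)]
  refine le_of_tendsto_of_tendsto hL hbound ?_
  filter_upwards [eventually_ge_atTop S, eventually_gt_atTop 0] with T hST hT
  exact lintegral_truncSqLoss_div_le hh hle hS hST hT

theorem lintegral_two_mul_sub_eq_lintegral_sq_mul [IsProbabilityMeasure μ] (hμ : MemLp id 3 μ)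
    (hmean : ∫ z, z ∂μ = 0) (hh : Measurable h) (hle : ∀ y, y ≤ h y) (hnonneg : ∀ y, 0 ≤ h y)
    (hup : ∀ y, h y ≤ max y 0 + c)
    (hinv : MeasurePreserving (fun p : ℝ × ℝ ↦ p.2 + h p.1) (ν.prod μ) ν) (hℓ : ℓ ≠ ⊤)
    (hν : Tendsto (fun x ↦ ν (Iic x) / ENNReal.ofReal x) atTop (nhds ℓ)) :
    ∫⁻ y, ENNReal.ofReal (2 * (h y - y)) ∂ν = (∫⁻ z, ENNReal.ofReal (z ^ 2) ∂μ) * ℓ := by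
  have hfin := measure_Iic_lt_top_of_tendsto hℓ hν
  have := sigmaFinite_of_measure_Iic_lt_top hfin
  have hμ₂ : MemLp id 2 μ := hμ.mono_exponent (by norm_num)
  have hlim : Tendsto (fun T ↦ (∫⁻ y, ENNReal.ofReal (truncSqLoss h T y) ∂ν) / ENNReal.ofReal T)
      atTop (nhds ((∫⁻ z, ENNReal.ofReal (z ^ 2) ∂μ) * ℓ)) := by
    refine (tendsto_lintegral_lintegral_truncSqRem_div hμ hh hle hup hℓ hν).congr' ?_
    filter_upwards [eventually_ge_atTop 0] with T hT
    rw [lintegral_truncSqLoss_eq hμ₂ hmean hh hle hnonneg hinv hT (hfin T)]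
  exact (lintegral_two_mul_sub_le_of_tendsto hh hlim).antisymm
    (le_lintegral_two_mul_sub_of_tendsto hh hle
      (ENNReal.mul_ne_top hμ₂.integrable_sq.lintegral_lt_top.ne hℓ) hlim)

end ReflectedWalk

section ExponentialTail

lemma memLp_of_exponential_tail {Ω : Type*} [MeasurableSpace Ω] {μ : Measure Ω} {f : Ω → ℝ}
    (hf : AEMeasurable f μ) {δ C : ℝ} (hδ : 0 < δ)
    (htail : ∀ x : ℝ, 0 < x → μ {ω | x < |f ω|} ≤ ENNReal.ofReal (C * Real.exp (-δ * x)))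
    {p : ℝ≥0∞} (hp₀ : p ≠ 0) (hp : p ≠ ⊤) : MemLp f p μ := by
  have hq : 0 < p.toReal := ENNReal.toReal_pos hp₀ hp
  have hdom : IntegrableOn (fun t ↦ C * (t ^ (p.toReal - 1) * Real.exp (-δ * t))) (Ioi 0) := by
    have hbase := integrableOn_rpow_mul_exp_neg_mul_rpow (p := 1) (s := p.toReal - 1)
      (by linarith) one_pos hδ
    simp only [Real.rpow_one] at hbase
    exact hbase.const_mul C
  rw [← integrable_norm_rpow_iff hf.aestronglyMeasurable hp₀ hp]
  refine ⟨(hf.norm.pow_const _).aestronglyMeasurable, ?_⟩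
  rw [hasFiniteIntegral_iff_ofReal (.of_forall fun _ ↦ by positivity),
    lintegral_rpow_eq_lintegral_meas_lt_mul μ (.of_forall fun _ ↦ norm_nonneg _) hf.norm hq]
  refine ENNReal.mul_lt_top ENNReal.ofReal_lt_top
    ((setLIntegral_mono' measurableSet_Ioi fun t ht ↦ ?_).trans_lt hdom.lintegral_lt_top)
  calc μ {ω | t < ‖f ω‖} * ENNReal.ofReal (t ^ (p.toReal - 1))
      ≤ ENNReal.ofReal (C * Real.exp (-δ * t)) * ENNReal.ofReal (t ^ (p.toReal - 1)) := by
        gcongr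
        exact htail t ht
    _ = ENNReal.ofReal (C * (t ^ (p.toReal - 1) * Real.exp (-δ * t))) := by
        rw [← ENNReal.ofReal_mul' (Real.rpow_nonneg (le_of_lt ht) _), mul_right_comm, mul_assoc]

end ExponentialTail

section StepDensity

variable {ζ : ℝ → ℝ}

/-- The law on `ℝ` with density `ζ`. -/
noncomputable def stepLaw (ζ : ℝ → ℝ) : Measure ℝ :=
  volume.withDensity fun z ↦ ENNReal.ofReal (ζ z)

lemma lintegral_stepLaw (hζ : Measurable ζ) {g : ℝ → ℝ≥0∞} (hg : Measurable g) :
    ∫⁻ z, g z ∂stepLaw ζ = ∫⁻ z, g z * ENNReal.ofReal (ζ z) := by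
  rw [stepLaw, lintegral_withDensity_eq_lintegral_mul _ hζ.ennreal_ofReal hg]
  simp only [Pi.mul_apply, mul_comm]

lemma integral_stepLaw (hζ : Measurable ζ) (hζ₀ : ∀ z, 0 ≤ ζ z) (g : ℝ → ℝ) :
    ∫ z, g z ∂stepLaw ζ = ∫ z, g z * ζ z := by
  rw [stepLaw, integral_withDensity_eq_integral_toReal_smul hζ.ennreal_ofReal
    (.of_forall fun _ ↦ ENNReal.ofReal_lt_top)]
  simp only [ENNReal.toReal_ofReal (hζ₀ _), smul_eq_mul, mul_comm]

lemma integrable_stepLaw_iff (hζ : Measurable ζ) (hζ₀ : ∀ z, 0 ≤ ζ z) {g : ℝ → ℝ} :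
    Integrable g (stepLaw ζ) ↔ Integrable fun z ↦ g z * ζ z := by
  rw [stepLaw, integrable_withDensity_iff hζ.ennreal_ofReal
    (.of_forall fun _ ↦ ENNReal.ofReal_lt_top)]
  simp only [ENNReal.toReal_ofReal (hζ₀ _)]

lemma stepLaw_apply (hζ₀ : ∀ z, 0 ≤ ζ z) (hint : Integrable ζ) {s : Set ℝ}
    (hs : MeasurableSet s) : stepLaw ζ s = ENNReal.ofReal (∫ z in s, ζ z) := by
  rw [stepLaw, withDensity_apply _ hs,
    ofReal_integral_eq_lintegral_ofReal hint.integrableOn (.of_forall hζ₀)]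

/-- Probability densities of centred steps with a finite third absolute moment. -/
structure IsStepDensity (ζ : ℝ → ℝ) : Prop where
  measurable : Measurable ζ
  nonneg : ∀ z, 0 ≤ ζ z
  integral_eq_one : ∫ z, ζ z = 1
  integral_mul_eq_zero : ∫ z, z * ζ z = 0
  integrable_abs_pow_three_mul : Integrable fun z ↦ |z| ^ 3 * ζ z

namespace IsStepDensity

lemma of_exponential_tail (hmeas : Measurable ζ) (hnonneg : ∀ z, 0 ≤ ζ z)
    (hone : ∫ z, ζ z = 1) (hmean : ∫ z, z * ζ z = 0) {δ C : ℝ} (hδ : 0 < δ)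
    (htail : ∀ x : ℝ, 0 ≤ x → ∫ z in {z : ℝ | x < |z|}, ζ z ≤ C * Real.exp (-δ * x)) :
    IsStepDensity ζ where
  measurable := hmeas
  nonneg := hnonneg
  integral_eq_one := hone
  integral_mul_eq_zero := hmean
  integrable_abs_pow_three_mul := by
    have hint : Integrable ζ := .of_integral_ne_zero (by simp [hone])
    have hLp : MemLp id 3 (stepLaw ζ) := by
      refine memLp_of_exponential_tail (by fun_prop) hδ (C := C) (fun x hx ↦ ?_)
        three_ne_zero ENNReal.ofNat_ne_top
      rw [stepLaw_apply hnonneg hint (measurableSet_lt measurable_const (by fun_prop))]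
      exact ENNReal.ofReal_le_ofReal (htail x hx.le)
    exact (integrable_stepLaw_iff hmeas hnonneg).1 (hLp.integrable_norm_pow three_ne_zero)

lemma comp_neg (hζ : IsStepDensity ζ) : IsStepDensity fun z ↦ ζ (-z) where
  measurable := hζ.measurable.comp measurable_neg
  nonneg z := hζ.nonneg (-z)
  integral_eq_one := by rw [integral_neg_eq_self, hζ.integral_eq_one]
  integral_mul_eq_zero := by
    have hodd := integral_neg_eq_self (fun z ↦ z * ζ z) volume
    simpa only [neg_mul, integral_neg, hζ.integral_mul_eq_zero, neg_eq_zero] using hodd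
  integrable_abs_pow_three_mul := by
    simpa only [abs_neg] using hζ.integrable_abs_pow_three_mul.comp_neg

lemma isProbabilityMeasure_stepLaw (hζ : IsStepDensity ζ) : IsProbabilityMeasure (stepLaw ζ) where
  measure_univ := by
    have hint : Integrable ζ := .of_integral_ne_zero (by simp [hζ.integral_eq_one])
    rw [stepLaw_apply hζ.nonneg hint .univ, setIntegral_univ, hζ.integral_eq_one,
      ENNReal.ofReal_one]

lemma memLp_three_stepLaw (hζ : IsStepDensity ζ) : MemLp id 3 (stepLaw ζ) := by
  rw [← integrable_norm_rpow_iff (by fun_prop) three_ne_zero ENNReal.ofNat_ne_top]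
  simpa [Real.rpow_ofNat] using
    (integrable_stepLaw_iff hζ.measurable hζ.nonneg).2 hζ.integrable_abs_pow_three_mul

lemma integral_id_stepLaw (hζ : IsStepDensity ζ) : ∫ z, z ∂stepLaw ζ = 0 := by
  rw [integral_stepLaw hζ.measurable hζ.nonneg, hζ.integral_mul_eq_zero]

end IsStepDensity

end StepDensity

section LyapunovFunctional

variable {ν : Measure ℝ}

lemma hY_eq_log_one_add_exp (y : ℝ) : hY y = Real.log (1 + Real.exp y) := by
  calc y + Real.log (1 + Real.exp (-y))
      = Real.log (Real.exp y * (1 + Real.exp (-y))) := by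
        rw [Real.log_mul (Real.exp_ne_zero y) (by positivity), Real.log_exp]
    _ = Real.log (1 + Real.exp y) := by
        rw [mul_add, mul_one, ← Real.exp_add, add_neg_cancel, Real.exp_zero, add_comm]

lemma log_one_add_exp_nonneg (y : ℝ) : 0 ≤ Real.log (1 + Real.exp y) :=
  Real.log_nonneg (by linarith [Real.exp_pos y])

lemma measurable_log_one_add_exp_neg :
    Measurable fun y ↦ Real.log (1 + Real.exp (-y)) := by
  fun_prop

lemma measurable_hY : Measurable hY :=
  measurable_id.add measurable_log_one_add_exp_neg

lemma hY_sub_self (y : ℝ) : hY y - y = Real.log (1 + Real.exp (-y)) :=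
  add_sub_cancel_left _ _

lemma le_hY (y : ℝ) : y ≤ hY y := by
  rw [← sub_nonneg, hY_sub_self]
  exact log_one_add_exp_nonneg _

lemma hY_nonneg (y : ℝ) : 0 ≤ hY y := by
  rw [hY_eq_log_one_add_exp]
  exact log_one_add_exp_nonneg y

lemma log_one_add_exp_le_one {y : ℝ} (hy : y ≤ 0) : Real.log (1 + Real.exp y) ≤ 1 :=
  calc Real.log (1 + Real.exp y) ≤ 1 + Real.exp y - 1 := Real.log_le_sub_one_of_pos (by positivity)
    _ ≤ 1 := by linarith [Real.exp_le_one_iff.2 hy]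

lemma hY_le_max_add_one (y : ℝ) : hY y ≤ max y 0 + 1 := by
  rcases le_total y 0 with hy | hy
  · rw [max_eq_right hy, zero_add, hY_eq_log_one_add_exp]
    exact log_one_add_exp_le_one hy
  · rw [max_eq_left hy, ← sub_le_iff_le_add', hY_sub_self]
    exact log_one_add_exp_le_one (neg_nonpos.2 hy)

lemma hasDerivAt_neg_log_one_add_exp_neg (t : ℝ) :
    HasDerivAt (fun t ↦ -Real.log (1 + Real.exp (-t))) (1 / (1 + Real.exp t)) t := by
  have hpos : 0 < 1 + Real.exp (-t) := by positivity
  refine ((((hasDerivAt_neg t).exp).const_add 1).log hpos.ne').neg.congr_deriv ?_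
  rw [Real.exp_neg]
  field_simp
  ring

lemma tendsto_log_one_add_exp_neg_atTop :
    Tendsto (fun t : ℝ ↦ Real.log (1 + Real.exp (-t))) atTop (nhds 0) := by
  simpa using ((Real.tendsto_exp_neg_atTop_nhds_zero.const_add 1).log (by norm_num))

lemma setLIntegral_Ici_one_div_one_add_exp (y : ℝ) :
    ∫⁻ t in Ici y, ENNReal.ofReal (1 / (1 + Real.exp t)) =
      ENNReal.ofReal (Real.log (1 + Real.exp (-y))) := by
  have hlim := tendsto_log_one_add_exp_neg_atTop.neg
  have hderiv : ∀ t ∈ Ici y, HasDerivAt (fun t ↦ -Real.log (1 + Real.exp (-t)))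
      (1 / (1 + Real.exp t)) t := fun t _ ↦ hasDerivAt_neg_log_one_add_exp_neg t
  have hpos : ∀ t ∈ Ioi y, 0 ≤ 1 / (1 + Real.exp t) := fun t _ ↦ by positivity
  rw [setLIntegral_congr Ioi_ae_eq_Ici.symm, ← ofReal_integral_eq_lintegral_ofReal
      (integrableOn_Ioi_deriv_of_nonneg' hderiv hpos hlim)
      (ae_restrict_of_forall_mem measurableSet_Ioi hpos),
    integral_Ioi_of_hasDerivAt_of_nonneg' hderiv hpos hlim, neg_zero, zero_sub, neg_neg]

lemma lintegral_setLIntegral_Ici {ρ : Measure ℝ} [SFinite ν] [SFinite ρ] {w : ℝ → ℝ≥0∞}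
    (hw : Measurable w) :
    ∫⁻ y, ∫⁻ t in Ici y, w t ∂ρ ∂ν = ∫⁻ t, ν (Iic t) * w t ∂ρ := by
  have hmeas : Measurable ({p : ℝ × ℝ | p.1 ≤ p.2}.indicator fun p ↦ w p.2) :=
    (hw.comp measurable_snd).indicator (measurableSet_le measurable_fst measurable_snd)
  calc ∫⁻ y, ∫⁻ t in Ici y, w t ∂ρ ∂ν
      = ∫⁻ y, ∫⁻ t, {p : ℝ × ℝ | p.1 ≤ p.2}.indicator (fun p ↦ w p.2) (y, t) ∂ρ ∂ν := by
        simp only [← lintegral_indicator measurableSet_Ici]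
        rfl
    _ = ∫⁻ t, ∫⁻ y, {p : ℝ × ℝ | p.1 ≤ p.2}.indicator (fun p ↦ w p.2) (y, t) ∂ν ∂ρ :=
        lintegral_lintegral_swap hmeas.aemeasurable
    _ = ∫⁻ t, ∫⁻ y, (Iic t).indicator (fun _ ↦ w t) y ∂ν ∂ρ := rfl
    _ = ∫⁻ t, ν (Iic t) * w t ∂ρ := by
        simp only [lintegral_indicator_const measurableSet_Iic, mul_comm]

lemma ofReal_Fs (hν : ∀ x, ν (Iic x) < ⊤) (x : ℝ) : ENNReal.ofReal (Fs ν x) = ν (Iic x) :=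
  ENNReal.ofReal_toReal (hν x).ne

lemma Fs_nonneg (ν : Measure ℝ) (x : ℝ) : 0 ≤ Fs ν x := ENNReal.toReal_nonneg

lemma Fs_mono (hν : ∀ x, ν (Iic x) < ⊤) : Monotone (Fs ν) := fun _ y hxy ↦
  ENNReal.toReal_mono (hν y).ne (measure_mono (Iic_subset_Iic.2 hxy))

lemma lintegral_Fs_div_one_add_exp (hν : ∀ x, ν (Iic x) < ⊤) :
    ∫⁻ t, ENNReal.ofReal (Fs ν t / (1 + Real.exp t)) =
      ∫⁻ y, ENNReal.ofReal (Real.log (1 + Real.exp (-y))) ∂ν := by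
  have := sigmaFinite_of_measure_Iic_lt_top hν
  calc ∫⁻ t, ENNReal.ofReal (Fs ν t / (1 + Real.exp t))
      = ∫⁻ t, ν (Iic t) * ENNReal.ofReal (1 / (1 + Real.exp t)) := by
        refine lintegral_congr fun t ↦ ?_
        rw [← ofReal_Fs hν, ← ENNReal.ofReal_mul' (by positivity), mul_one_div]
    _ = ∫⁻ y, ENNReal.ofReal (Real.log (1 + Real.exp (-y))) ∂ν := by
        simp only [← lintegral_setLIntegral_Ici (ν := ν) (ρ := volume)
          (w := fun t ↦ ENNReal.ofReal (1 / (1 + Real.exp t))) (by fun_prop),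
          setLIntegral_Ici_one_div_one_add_exp]

lemma integral_Fs_div_one_add_exp (hν : ∀ x, ν (Iic x) < ⊤) :
    ∫ t, Fs ν t / (1 + Real.exp t) = ∫ y, Real.log (1 + Real.exp (-y)) ∂ν := by
  have hmeas : Measurable fun t ↦ Fs ν t / (1 + Real.exp t) :=
    (Fs_mono hν).measurable.div (by fun_prop)
  rw [integral_eq_lintegral_of_nonneg_ae
      (.of_forall fun t ↦ div_nonneg (Fs_nonneg ν t) (by positivity))
      hmeas.aestronglyMeasurable,
    integral_eq_lintegral_of_nonneg_ae (.of_forall fun y ↦ log_one_add_exp_nonneg _)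
      measurable_log_one_add_exp_neg.aestronglyMeasurable, lintegral_Fs_div_one_add_exp hν]

end LyapunovFunctional

section EdgeMeasure

variable {ζ : ℝ → ℝ} {ν : Measure ℝ}

/-- The edge invariant measure `ν_◁` of the step density `ζ`: the invariant measure of the chain
`Y' = z + hY Y`, normalised by `ν ((-∞, x]) ∼ x` at `+∞`. The edge measure `ν_▷` is the one of the
reflected density. -/
structure IsEdgeMeasure (ζ : ℝ → ℝ) (ν : Measure ℝ) : Prop where
  isInvariantY : IsInvariantY ζ ν
  measure_Iic_lt_top : ∀ x, ν (Iic x) < ⊤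
  tendsto_Fs_div : Tendsto (fun x ↦ Fs ν x / x) atTop (nhds 1)

lemma measurePreserving_of_isInvariantY (hζ : Measurable ζ) (hν : IsInvariantY ζ ν) :
    MeasurePreserving (fun p : ℝ × ℝ ↦ p.2 + hY p.1) (ν.prod (stepLaw ζ)) ν := by
  have : SFinite (stepLaw ζ) := inferInstanceAs (SFinite (volume.withDensity _))
  have hmeas : Measurable fun p : ℝ × ℝ ↦ p.2 + hY p.1 :=
    measurable_snd.add (measurable_hY.comp measurable_fst)
  refine ⟨hmeas, Measure.ext_of_lintegral _ fun g hg ↦ ?_⟩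
  rw [lintegral_map hg hmeas,
    lintegral_prod (fun p ↦ g (p.2 + hY p.1)) (hg.comp hmeas).aemeasurable, hν g hg]
  exact lintegral_congr fun y ↦ lintegral_stepLaw hζ (hg.comp (measurable_id.add_const (hY y)))

namespace IsEdgeMeasure

lemma tendsto_measure_Iic_div (hν : IsEdgeMeasure ζ ν) :
    Tendsto (fun x ↦ ν (Iic x) / ENNReal.ofReal x) atTop (nhds 1) := by
  rw [← ENNReal.ofReal_one]
  refine (ENNReal.tendsto_ofReal hν.tendsto_Fs_div).congr' ?_
  filter_upwards [eventually_gt_atTop 0] with x hx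
  rw [ENNReal.ofReal_div_of_pos hx, ofReal_Fs hν.measure_Iic_lt_top]

lemma integral_log_one_add_exp_neg (hζ : IsStepDensity ζ) (hν : IsEdgeMeasure ζ ν) :
    ∫ y, Real.log (1 + Real.exp (-y)) ∂ν = (∫ z, z ^ 2 * ζ z) / 2 := by
  have := hζ.isProbabilityMeasure_stepLaw
  have hdrift := lintegral_two_mul_sub_eq_lintegral_sq_mul hζ.memLp_three_stepLaw
    hζ.integral_id_stepLaw measurable_hY le_hY hY_nonneg hY_le_max_add_one
    (measurePreserving_of_isInvariantY hζ.measurable hν.isInvariantY) ENNReal.one_ne_top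
    hν.tendsto_measure_Iic_div
  simp only [hY_sub_self, mul_one] at hdrift
  have htwo : ∫ y, 2 * Real.log (1 + Real.exp (-y)) ∂ν = ∫ z, z ^ 2 * ζ z := by
    rw [← integral_stepLaw hζ.measurable hζ.nonneg, integral_eq_lintegral_of_nonneg_ae
        (.of_forall fun y ↦ mul_nonneg zero_le_two (log_one_add_exp_nonneg _))
        (measurable_log_one_add_exp_neg.const_mul 2).aestronglyMeasurable,
      integral_eq_lintegral_of_nonneg_ae (.of_forall fun z ↦ sq_nonneg z) (by fun_prop), hdrift]
  rw [← htwo, integral_const_mul, mul_div_cancel_left₀ _ two_ne_zero]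

end IsEdgeMeasure

end EdgeMeasure

theorem stmt13_general {ζ : ℝ → ℝ} (hζ : IsStepDensity ζ) {νl νr : Measure ℝ}
    (hl : IsEdgeMeasure ζ νl) (hr : IsEdgeMeasure (fun x ↦ ζ (-x)) νr) :
    (∫ y, Real.log (1 + Real.exp (-y)) ∂νr = ∫ y, Real.log (1 + Real.exp (-y)) ∂νl) ∧
      ∫ y, Fs νr y / (1 + Real.exp y) = ∫ y, Fs νl y / (1 + Real.exp y) := by
  have hvariance : ∫ z, z ^ 2 * ζ (-z) = ∫ z, z ^ 2 * ζ z := by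
    rw [← integral_neg_eq_self]
    simp only [neg_sq, neg_neg]
  have hlog : ∫ y, Real.log (1 + Real.exp (-y)) ∂νr = ∫ y, Real.log (1 + Real.exp (-y)) ∂νl := by
    rw [hr.integral_log_one_add_exp_neg hζ.comp_neg, hl.integral_log_one_add_exp_neg hζ, hvariance]
  refine ⟨hlog, ?_⟩
  rw [integral_Fs_div_one_add_exp hr.measure_Iic_lt_top,
    integral_Fs_div_one_add_exp hl.measure_Iic_lt_top, hlog]

/-- The two edge invariant measures give the same value to the Lyapunov functional. -/
theorem stmt13
    (ζ : ℝ → ℝ) (hζmeas : Measurable ζ) (hζnn : ∀ x, 0 ≤ ζ x)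
    (hζprob : ∫ x, ζ x = 1)
    (hmean : ∫ x, x * ζ x = 0)
    (δ : ℝ) (hδ : 0 < δ) (Cδ : ℝ)
    (htail : ∀ x : ℝ, 0 ≤ x → ∫ y in {y : ℝ | x < |y|}, ζ y ≤ Cδ * Real.exp (-δ * x))
    (θ : ℝ) (hθ0 : 0 < θ) (hθ1 : θ ≤ 1) (Cθ : ℝ)
    (hHolder : ∀ x y : ℝ, |ζ x - ζ y| ≤ Cθ * |x - y| ^ θ)
    (νl νr : Measure ℝ)
    (hinvl : IsInvariantY ζ νl) (hinvr : IsInvariantY (fun x => ζ (-x)) νr)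
    (hfinl : ∀ x : ℝ, νl (Set.Iic x) < ⊤) (hfinr : ∀ x : ℝ, νr (Set.Iic x) < ⊤)
    (hnorml : Tendsto (fun x => Fs νl x / x) atTop (nhds 1))
    (hnormr : Tendsto (fun x => Fs νr x / x) atTop (nhds 1)) :
    (∫ y, Real.log (1 + Real.exp (-y)) ∂νr = ∫ y, Real.log (1 + Real.exp (-y)) ∂νl) ∧
      ∫ y, Fs νr y / (1 + Real.exp y) = ∫ y, Fs νl y / (1 + Real.exp y) := by
  exact stmt13_general (.of_exponential_tail hζmeas hζnn hζprob hmean hδ htail)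
    ⟨hinvl, hfinl, hnorml⟩ ⟨hinvr, hfinr, hnormr⟩
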